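/- arXiv:2502.12500 — 6 statements merged into one kernel-verified Lean document; each statement's English description precedes it below -/
import Mathlib

section
/- Let n ≥ 1 and let K be a ℚ-subalgebra of Mat(n,ℚ) that is commutative and reduced (as a ring), and suppose the natural action of K on ℚⁿ is irreducible, i.e. the only ℚ-linear subspaces V ⊆ ℚⁿ with A·V ⊆ V for all A ∈ K are V = {0} and V = ℚⁿ. Then the dimension of K as a ℚ-vector space equals n. -/
/-! A faithful simple module over a commutative ring is free of rank one: a nonzero vector `m`
generates it, and since the ring is commutative, a scalar killing the generator `m` kills the whole
module, hence vanishes. So `a ↦ a • m` identifies the ring with the module. -/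

section Module

variable {R A M : Type*}

theorem toSpanSingleton_injective_of_surjective [CommSemiring A] [AddCommMonoid M] [Module A M]
    [FaithfulSMul A M] {m : M} (hm : Function.Surjective (LinearMap.toSpanSingleton A M m)) :
    Function.Injective (LinearMap.toSpanSingleton A M m) := by
  intro a b (hab : a • m = b • m)
  refine eq_of_smul_eq_smul fun x : M ↦ ?_
  obtain ⟨c, rfl : c • m = x⟩ := hm x
  rw [smul_comm a, hab, smul_comm c]

theorem toSpanSingleton_bijective_of_isSimpleModule [CommRing A] [AddCommGroup M] [Module A M]
    [FaithfulSMul A M] [IsSimpleModule A M] {m : M} (hm : m ≠ 0) :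
    Function.Bijective (LinearMap.toSpanSingleton A M m) :=
  have hsurj := IsSimpleModule.toSpanSingleton_surjective A hm
  ⟨toSpanSingleton_injective_of_surjective hsurj, hsurj⟩

variable (R A M) in
theorem finrank_eq_of_isSimpleModule [Semiring R] [CommRing A] [AddCommGroup M] [Module R A]
    [Module R M] [Module A M] [IsScalarTower R A A] [IsScalarTower R A M] [FaithfulSMul A M]
    [IsSimpleModule A M] :
    Module.finrank R A = Module.finrank R M := by
  have := IsSimpleModule.nontrivial A M
  obtain ⟨m, hm⟩ := exists_ne (0 : M)
  let e : A ≃ₗ[A] M := .ofBijective _ (toSpanSingleton_bijective_of_isSimpleModule hm)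
  exact (e.restrictScalars R).finrank_eq

theorem isSimpleModule_of_forall_smul_mem [Semiring R] [Ring A] [AddCommGroup M] [SMul R A]
    [Module R M] [Module A M] [IsScalarTower R A M] [Nontrivial M]
    (h : ∀ V : Submodule R M, (∀ a : A, ∀ v ∈ V, a • v ∈ V) → V = ⊥ ∨ V = ⊤) :
    IsSimpleModule A M := by
  refine (isSimpleModule_iff A M).mpr ⟨fun V ↦ ?_⟩
  simpa using h (V.restrictScalars R) fun a _ hv ↦ V.smul_mem a hv

end Module

section Matrix

variable {ι R : Type*} [Fintype ι] [DecidableEq ι]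

-- In this scope `A • v` is, definitionally, `A.mulVec v`.
open scoped Matrix.Module

instance faithfulSMul_matrix [Ring R] : FaithfulSMul (Matrix ι ι R) (ι → R) :=
  ⟨fun h ↦ Matrix.mulVec_injective (funext h)⟩

theorem subalgebra_finrank_eq_of_irreducible_general [CommRing R] [Nontrivial R] [Nonempty ι]
    (K : Subalgebra R (Matrix ι ι R)) (hcomm : ∀ A ∈ K, ∀ B ∈ K, A * B = B * A)
    (hirr : ∀ V : Submodule R (ι → R), (∀ A ∈ K, ∀ v ∈ V, A.mulVec v ∈ V) → V = ⊥ ∨ V = ⊤) :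
    Module.finrank R K = Fintype.card ι := by
  let _ : CommRing K :=
    { (inferInstance : Ring K) with mul_comm A B := Subtype.ext (hcomm A A.2 B B.2) }
  have : IsSimpleModule K (ι → R) :=
    isSimpleModule_of_forall_smul_mem fun V hV ↦ hirr V fun A hA ↦ hV ⟨A, hA⟩
  rw [finrank_eq_of_isSimpleModule R K (ι → R), Module.finrank_fintype_fun_eq_card]

end Matrix

/-- A commutative reduced `ℚ`-subalgebra `K` of `Mat(n,ℚ)` whose natural action on `ℚⁿ`
is irreducible has `ℚ`-dimension `n`. -/
theorem subalgebra_finrank_eq_of_irreducible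
    (n : ℕ) (hn : 1 ≤ n) (K : Subalgebra ℚ (Matrix (Fin n) (Fin n) ℚ))
    (hcomm : ∀ A ∈ K, ∀ B ∈ K, A * B = B * A)
    (hred : IsReduced ↥K)
    (hirr : ∀ V : Submodule ℚ (Fin n → ℚ),
      (∀ A ∈ K, ∀ v ∈ V, A.mulVec v ∈ V) → V = ⊥ ∨ V = ⊤) :
    Module.finrank ℚ ↥K = n := by
  have : NeZero n := ⟨Nat.one_le_iff_ne_zero.mp hn⟩
  simpa using subalgebra_finrank_eq_of_irreducible_general K hcomm hirr
end

section
/- Let g be a finite-dimensional real unimodular Lie algebra with a meta-abelian decomposition g = m ⊕ n and an LCK structure (J, ⟨·,·⟩, θ). If the restriction of θ to n is not identically zero, then J is abelian, i.e. [Jx, Jy] = [x, y] for all x, y ∈ g. -/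
/-!
Write `ω = B (J ·) ·`. If `u ∈ n` and `θ u ≠ 0`, evaluating `dω = θ ∧ ω` on `(u, v, w)` with
`v, w ∈ n ∩ ker θ` gives `0 = θ u * ω v w`, because `n` is abelian. So `n ∩ ker θ`, which contains
`[g, g]`, is `ω`-isotropic. Integrability says that `J` maps `⁅x, J y⁆ + ⁅J x, y⁆` to `-w`, where
`w = ⁅x, y⁆ - ⁅J x, J y⁆`; both vectors lie in `[g, g]`, so isotropy gives `B w w = 0`.
-/

section

variable {R L : Type*} [CommRing R] [LieRing L] [LieAlgebra R L]

/-- `θ` is a Lee form of the bilinear form `ω`: `dω = θ ∧ ω`, where `d` is the Chevalley–Eilenberg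
differential with trivial coefficients. Closedness of `θ` is not included. -/
def IsLeeForm (ω : L →ₗ[R] L →ₗ[R] R) (θ : L →ₗ[R] R) : Prop :=
  ∀ x y z : L, -ω ⁅x, y⁆ z - ω ⁅y, z⁆ x - ω ⁅z, x⁆ y = θ x * ω y z + θ y * ω z x + θ z * ω x y

theorem IsLeeForm.isotropic_inf_ker [NoZeroDivisors R] {ω : L →ₗ[R] L →ₗ[R] R} {θ : L →ₗ[R] R}
    (h : IsLeeForm ω θ) {n : Submodule R L} (hnab : ∀ x ∈ n, ∀ y ∈ n, ⁅x, y⁆ = 0)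
    (hθn : ∃ u ∈ n, θ u ≠ 0) :
    ∀ v ∈ n ⊓ θ.ker, ∀ w ∈ n ⊓ θ.ker, ω v w = 0 := by
  rintro v ⟨hv, hθv : θ v = 0⟩ w ⟨hw, hθw : θ w = 0⟩
  obtain ⟨u, hu, hθu⟩ := hθn
  have hprod : θ u * ω v w = 0 := by
    simpa [hnab u hu v hv, hnab v hv w hw, hnab w hw u hu, hθv, hθw] using (h u v w).symm
  exact (mul_eq_zero.mp hprod).resolve_left hθu

theorem lie_mem_of_codisjoint {m n : Submodule R L} (hmn : Codisjoint m n)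
    (hm : ∀ x ∈ m, ∀ y ∈ m, ⁅x, y⁆ ∈ n) (hn : ∀ x : L, ∀ y ∈ n, ⁅x, y⁆ ∈ n) (x y : L) :
    ⁅x, y⁆ ∈ n := by
  have hn' (a b : L) (ha : a ∈ n) : ⁅a, b⁆ ∈ n := by
    rw [← lie_skew]
    exact n.neg_mem (hn b a ha)
  obtain ⟨a, b, ha, hb, rfl⟩ := Submodule.codisjoint_iff_exists_add_eq.mp hmn x
  obtain ⟨c, d, hc, hd, rfl⟩ := Submodule.codisjoint_iff_exists_add_eq.mp hmn y
  rw [add_lie, lie_add]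
  exact n.add_mem (n.add_mem (hm a ha c hc) (hn a d hd)) (hn' b (c + d) hb)

theorem lie_map_map_eq_of_isotropic {B : L →ₗ[R] L →ₗ[R] R} {J : L →ₗ[R] L}
    (hB : ∀ x : L, B x x = 0 → x = 0)
    (hJint : ∀ x y : L, ⁅x, y⁆ - ⁅J x, J y⁆ + J ⁅x, J y⁆ + J ⁅J x, y⁆ = 0)
    {k : Submodule R L} (hk : ∀ x y : L, ⁅x, y⁆ ∈ k)
    (hiso : ∀ v ∈ k, ∀ w ∈ k, B (J v) w = 0) (x y : L) :
    ⁅J x, J y⁆ = ⁅x, y⁆ := by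
  set v := ⁅x, J y⁆ + ⁅J x, y⁆ with hv
  set w := ⁅x, y⁆ - ⁅J x, J y⁆ with hw
  have hJv : J v = -w := by
    rw [hv, hw, map_add, eq_neg_iff_add_eq_zero, ← hJint x y]
    abel
  have hww : B w w = 0 := by
    simpa [hJv] using hiso v (k.add_mem (hk _ _) (hk _ _)) w (k.sub_mem (hk _ _) (hk _ _))
  exact (sub_eq_zero.mp (hB w hww)).symm

theorem lck_abelian_complex_structure_general [NoZeroDivisors R]
    {B : L →ₗ[R] L →ₗ[R] R} {J : L →ₗ[R] L} {θ : L →ₗ[R] R}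
    (hB : ∀ x : L, B x x = 0 → x = 0)
    (hJint : ∀ x y : L, ⁅x, y⁆ - ⁅J x, J y⁆ + J ⁅x, J y⁆ + J ⁅J x, y⁆ = 0)
    (hθbr : ∀ x y : L, θ ⁅x, y⁆ = 0) (hLee : IsLeeForm (B ∘ₗ J) θ)
    {n : Submodule R L} (hnab : ∀ x ∈ n, ∀ y ∈ n, ⁅x, y⁆ = 0) (hder : ∀ x y : L, ⁅x, y⁆ ∈ n)
    (hθn : ∃ u ∈ n, θ u ≠ 0) (x y : L) :
    ⁅J x, J y⁆ = ⁅x, y⁆ :=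
  lie_map_map_eq_of_isotropic hB hJint (k := n ⊓ θ.ker) (fun a b ↦ ⟨hder a b, hθbr a b⟩)
    (hLee.isotropic_inf_ker hnab hθn) x y

end

/-- If a finite-dimensional real unimodular Lie algebra `g` with a meta-abelian
decomposition `g = m ⊕ n` carries an LCK structure `(J, B, θ)` whose Lee form `θ` does
not vanish identically on `n`, then `J` is abelian: `⁅Jx, Jy⁆ = ⁅x, y⁆`. -/
theorem lck_abelian_complex_structure
    (g : Type*) [LieRing g] [LieAlgebra ℝ g] [FiniteDimensional ℝ g]
    (B : g →ₗ[ℝ] g →ₗ[ℝ] ℝ) (J : g →ₗ[ℝ] g) (θ : g →ₗ[ℝ] ℝ)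
    (hBsymm : ∀ x y : g, B x y = B y x)
    (hBpos : ∀ x : g, x ≠ 0 → 0 < B x x)
    (hJ2 : ∀ x : g, J (J x) = -x)
    (hJB : ∀ x y : g, B (J x) (J y) = B x y)
    (hJint : ∀ x y : g, ⁅x, y⁆ - ⁅J x, J y⁆ + J ⁅x, J y⁆ + J ⁅J x, y⁆ = 0)
    (hθbr : ∀ x y : g, θ ⁅x, y⁆ = 0)
    (hLCK : ∀ x y z : g,
      -(B (J ⁅x, y⁆) z) - B (J ⁅y, z⁆) x - B (J ⁅z, x⁆) y =
        θ x * B (J y) z + θ y * B (J z) x + θ z * B (J x) y)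
    (m n : Submodule ℝ g)
    (hcompl : IsCompl m n)
    (hnab : ∀ x ∈ n, ∀ y ∈ n, ⁅x, y⁆ = (0 : g))
    (hnideal : ∀ x : g, ∀ y ∈ n, ⁅x, y⁆ ∈ n)
    (hmab : ∀ x ∈ m, ∀ y ∈ m, ⁅x, y⁆ = (0 : g))
    (hunimod : ∀ x : g, LinearMap.trace ℝ g (LieAlgebra.ad ℝ g x) = 0)
    (hθn : ∃ x ∈ n, θ x ≠ 0) :
    ∀ x y : g, ⁅J x, J y⁆ = ⁅x, y⁆ := by
  have hder : ∀ x y : g, ⁅x, y⁆ ∈ n :=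
    lie_mem_of_codisjoint hcompl.codisjoint (fun x hx y hy ↦ hmab x hx y hy ▸ n.zero_mem) hnideal
  have hBanis : ∀ x : g, B x x = 0 → x = 0 := fun x ↦ not_imp_not.mp fun hx ↦ (hBpos x hx).ne'
  exact lck_abelian_complex_structure_general hBanis hJint hθbr hLCK hnab hder hθn
end

section
/- Let g be a finite-dimensional real unimodular Lie algebra with a meta-abelian decomposition g = m ⊕ n and an LCK structure (J, ⟨·,·⟩, θ) such that θ ≠ 0, θ vanishes on n, and n + J(n) = g. Set a = n ∩ J(n). Then for all u ∈ m and all x ∈ a one has [u, Jx] = J[u, x]. -/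
/-!
For `v, x, J x` in the abelian subspace `n`, two of the four terms of the Nijenhuis tensor vanish
on `(v, x)`, and what remains says that `J v` acts `J`-linearly at `x`. Elements of `n` act as zero
on `x` and `J x`, so linearity extends this from `J n` to `n + J n = g`.
-/

section ComplexStructure

variable {R : Type*}

theorem apply_mem_inf_map_of_apply_apply_eq_neg {M : Type*} [Ring R] [AddCommGroup M] [Module R M]
    {J : M →ₗ[R] M} (hJ2 : ∀ x, J (J x) = -x) {n : Submodule R M} {x : M}
    (hx : x ∈ n ⊓ n.map J) : J x ∈ n ⊓ n.map J := by
  obtain ⟨hxn, w, hw, rfl⟩ := hx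
  refine ⟨?_, Submodule.mem_map_of_mem hxn⟩
  rw [hJ2]
  exact n.neg_mem hw

variable {L : Type*} [CommRing R] [LieRing L] [LieAlgebra R L] {J : L →ₗ[R] L}

theorem lie_apply_apply_of_nijenhuis_eq_zero {v x : L}
    (hN : ⁅v, x⁆ - ⁅J v, J x⁆ + J ⁅v, J x⁆ + J ⁅J v, x⁆ = 0)
    (hvx : ⁅v, x⁆ = 0) (hvJx : ⁅v, J x⁆ = 0) : ⁅J v, J x⁆ = J ⁅J v, x⁆ := by
  rwa [hvx, hvJx, map_zero, zero_sub, add_zero, neg_add_eq_zero] at hN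

theorem lck_bracket_commutes_with_J_on_a_general (hJ2 : ∀ x, J (J x) = -x)
    (hJint : ∀ x y : L, ⁅x, y⁆ - ⁅J x, J y⁆ + J ⁅x, J y⁆ + J ⁅J x, y⁆ = 0)
    {n : Submodule R L} (hnab : ∀ x ∈ n, ∀ y ∈ n, ⁅x, y⁆ = (0 : L))
    (hspan : n ⊔ n.map J = ⊤) (u : L) {x : L} (hx : x ∈ n ⊓ n.map J) :
    ⁅u, J x⁆ = J ⁅u, x⁆ := by
  have hxn : x ∈ n := hx.1
  have hJxn : J x ∈ n := (apply_mem_inf_map_of_apply_apply_eq_neg hJ2 hx).1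
  have hu : u ∈ n ⊔ n.map J := hspan ▸ Submodule.mem_top
  obtain ⟨y, hy, _, ⟨v, hv, rfl⟩, rfl⟩ := Submodule.mem_sup.mp hu
  have hJv : ⁅J v, J x⁆ = J ⁅J v, x⁆ :=
    lie_apply_apply_of_nijenhuis_eq_zero (hJint v x)
      (hnab v hv x hxn) (hnab v hv (J x) hJxn)
  calc ⁅y + J v, J x⁆ = ⁅J v, J x⁆ := by rw [add_lie, hnab y hy (J x) hJxn, zero_add]
    _ = J ⁅J v, x⁆ := hJv
    _ = J ⁅y + J v, x⁆ := by rw [add_lie, hnab y hy x hxn, zero_add]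

end ComplexStructure

/-- For a non-Vaisman LCK structure on a unimodular meta-abelian Lie algebra
`g = m ⊕ n` with `n + J(n) = g`, every `u ∈ m` acts complex-linearly on the maximal
`J`-invariant subspace `a = n ∩ J(n)`: `⁅u, Jx⁆ = J⁅u, x⁆`. -/
theorem lck_bracket_commutes_with_J_on_a
    (g : Type*) [LieRing g] [LieAlgebra ℝ g] [FiniteDimensional ℝ g]
    (B : g →ₗ[ℝ] g →ₗ[ℝ] ℝ) (J : g →ₗ[ℝ] g) (θ : g →ₗ[ℝ] ℝ)
    (hBsymm : ∀ x y : g, B x y = B y x)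
    (hBpos : ∀ x : g, x ≠ 0 → 0 < B x x)
    (hJ2 : ∀ x : g, J (J x) = -x)
    (hJB : ∀ x y : g, B (J x) (J y) = B x y)
    (hJint : ∀ x y : g, ⁅x, y⁆ - ⁅J x, J y⁆ + J ⁅x, J y⁆ + J ⁅J x, y⁆ = 0)
    (hθbr : ∀ x y : g, θ ⁅x, y⁆ = 0)
    (hLCK : ∀ x y z : g,
      -(B (J ⁅x, y⁆) z) - B (J ⁅y, z⁆) x - B (J ⁅z, x⁆) y =
        θ x * B (J y) z + θ y * B (J z) x + θ z * B (J x) y)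
    (m n : Submodule ℝ g)
    (hcompl : IsCompl m n)
    (hnab : ∀ x ∈ n, ∀ y ∈ n, ⁅x, y⁆ = (0 : g))
    (hnideal : ∀ x : g, ∀ y ∈ n, ⁅x, y⁆ ∈ n)
    (hmab : ∀ x ∈ m, ∀ y ∈ m, ⁅x, y⁆ = (0 : g))
    (hunimod : ∀ x : g, LinearMap.trace ℝ g (LieAlgebra.ad ℝ g x) = 0)
    (hθ0 : θ ≠ 0)
    (hθn : ∀ x ∈ n, θ x = 0)
    (hspan : n ⊔ Submodule.map J n = ⊤) :
    ∀ u ∈ m, ∀ x ∈ n ⊓ Submodule.map J n, ⁅u, J x⁆ = J ⁅u, x⁆ := by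
  intro u _ x hx
  exact lck_bracket_commutes_with_J_on_a_general hJ2 hJint hnab hspan u hx
end

section
/- Let g be a finite-dimensional real unimodular Lie algebra with a meta-abelian decomposition g = m ⊕ n and an LCK structure (J, ⟨·,·⟩, θ) such that θ ≠ 0, θ vanishes on n, and n + J(n) = g. Then the subspace a = n ∩ J(n) is an ideal of g, i.e. [g, a] ⊆ a. -/
/-!
If `x` and `y` lie in the abelian ideal `n` and so does `J y`, integrability collapses to
`J ⁅J x, y⁆ = ⁅J x, J y⁆`, whose right side is again in `n`. So `ad (J x)` preserves
`a = n ∩ J n`, while `ad x` kills it.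
-/

section ComplexStructure

variable {R g : Type*} [CommRing R] [LieRing g] [LieAlgebra R g]

/-- A complex structure on a Lie algebra: an endomorphism with square `-1` and vanishing
Nijenhuis tensor, so that over `ℝ` it induces a left-invariant complex structure on a Lie group.
The expression in `integrable` is the negative of the usual Nijenhuis tensor. -/
structure IsComplexStructure (J : g →ₗ[R] g) : Prop where
  apply_apply (x : g) : J (J x) = -x
  integrable (x y : g) : ⁅x, y⁆ - ⁅J x, J y⁆ + J ⁅x, J y⁆ + J ⁅J x, y⁆ = 0

namespace IsComplexStructure

variable {J : g →ₗ[R] g} {n : Submodule R g}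

theorem mem_map_iff (hJ : IsComplexStructure J) {x : g} : x ∈ n.map J ↔ J x ∈ n := by
  refine ⟨?_, fun hx ↦ ⟨-J x, n.neg_mem hx, by rw [map_neg, hJ.apply_apply, neg_neg]⟩⟩
  rintro ⟨y, hy, rfl⟩
  rw [hJ.apply_apply]
  exact n.neg_mem hy

theorem map_lie_map_left (hJ : IsComplexStructure J) {x y : g} (hxy : ⁅x, y⁆ = 0)
    (hxJy : ⁅x, J y⁆ = 0) : J ⁅J x, y⁆ = ⁅J x, J y⁆ := by
  have nijenhuis := hJ.integrable x y
  rw [hxy, hxJy, map_zero, zero_sub, add_zero] at nijenhuis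
  exact (neg_add_eq_zero.mp nijenhuis).symm

theorem lie_map_mem_inf_map (hJ : IsComplexStructure J)
    (hnab : ∀ x ∈ n, ∀ y ∈ n, ⁅x, y⁆ = (0 : g)) (hnideal : ∀ x : g, ∀ y ∈ n, ⁅x, y⁆ ∈ n)
    {x y : g} (hx : x ∈ n) (hy : y ∈ n ⊓ n.map J) : ⁅J x, y⁆ ∈ n ⊓ n.map J := by
  obtain ⟨hyn, hyJ⟩ := hy
  have hJy : J y ∈ n := hJ.mem_map_iff.mp hyJ
  refine ⟨hnideal _ _ hyn, hJ.mem_map_iff.mpr ?_⟩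
  rw [hJ.map_lie_map_left (hnab x hx y hyn) (hnab x hx (J y) hJy)]
  exact hnideal _ _ hJy

end IsComplexStructure

theorem lck_a_is_ideal_general {J : g →ₗ[R] g} (hJ : IsComplexStructure J) {n : Submodule R g}
    (hnab : ∀ x ∈ n, ∀ y ∈ n, ⁅x, y⁆ = (0 : g)) (hnideal : ∀ x : g, ∀ y ∈ n, ⁅x, y⁆ ∈ n) :
    ∀ x ∈ n ⊔ n.map J, ∀ y ∈ n ⊓ n.map J, ⁅x, y⁆ ∈ n ⊓ n.map J := by
  intro x hx y hy
  obtain ⟨s, hs, _, ⟨t, ht, rfl⟩, rfl⟩ := Submodule.mem_sup.mp hx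
  rw [add_lie, hnab s hs y hy.1, zero_add]
  exact hJ.lie_map_mem_inf_map hnab hnideal ht hy

end ComplexStructure

/-- For a non-Vaisman LCK structure on a unimodular meta-abelian Lie algebra
`g = m ⊕ n` with `n + J(n) = g`, the maximal `J`-invariant subspace `a = n ∩ J(n)`
is an ideal of `g`. -/
theorem lck_a_is_ideal
    (g : Type*) [LieRing g] [LieAlgebra ℝ g] [FiniteDimensional ℝ g]
    (B : g →ₗ[ℝ] g →ₗ[ℝ] ℝ) (J : g →ₗ[ℝ] g) (θ : g →ₗ[ℝ] ℝ)
    (hBsymm : ∀ x y : g, B x y = B y x)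
    (hBpos : ∀ x : g, x ≠ 0 → 0 < B x x)
    (hJ2 : ∀ x : g, J (J x) = -x)
    (hJB : ∀ x y : g, B (J x) (J y) = B x y)
    (hJint : ∀ x y : g, ⁅x, y⁆ - ⁅J x, J y⁆ + J ⁅x, J y⁆ + J ⁅J x, y⁆ = 0)
    (hθbr : ∀ x y : g, θ ⁅x, y⁆ = 0)
    (hLCK : ∀ x y z : g,
      -(B (J ⁅x, y⁆) z) - B (J ⁅y, z⁆) x - B (J ⁅z, x⁆) y =
        θ x * B (J y) z + θ y * B (J z) x + θ z * B (J x) y)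
    (m n : Submodule ℝ g)
    (hcompl : IsCompl m n)
    (hnab : ∀ x ∈ n, ∀ y ∈ n, ⁅x, y⁆ = (0 : g))
    (hnideal : ∀ x : g, ∀ y ∈ n, ⁅x, y⁆ ∈ n)
    (hmab : ∀ x ∈ m, ∀ y ∈ m, ⁅x, y⁆ = (0 : g))
    (hunimod : ∀ x : g, LinearMap.trace ℝ g (LieAlgebra.ad ℝ g x) = 0)
    (hθ0 : θ ≠ 0)
    (hθn : ∀ x ∈ n, θ x = 0)
    (hspan : n ⊔ Submodule.map J n = ⊤) :
    ∀ x : g, ∀ y ∈ n ⊓ Submodule.map J n, ⁅x, y⁆ ∈ n ⊓ Submodule.map J n := by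
  intro x
  exact lck_a_is_ideal_general ⟨hJ2, hJint⟩ hnab hnideal x (hspan ▸ Submodule.mem_top)
end

section
/- Let g be a finite-dimensional real unimodular Lie algebra with a meta-abelian decomposition g = m ⊕ n and an LCK structure (J, ⟨·,·⟩, θ) such that θ ≠ 0, θ vanishes on n, and n + J(n) = g. Set a = n ∩ J(n) and let k be the orthogonal complement of a in n with respect to ⟨·,·⟩. Then k is an ideal of g, i.e. [g, k] ⊆ k. -/
/-!
Write `a = n ∩ J n`, a `J`-stable subspace, and let `k` be its orthogonal complement in `n`. Because
`n` is abelian, integrability of `J` says that `ad (J w)` commutes with `J` on `a` for each `w ∈ n`;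
since `g = n + J n`, this makes `a` an ideal of `g`. Evaluating `dω = θ ∧ ω` on `y ∈ a`, `v ∈ n` and
`x ∈ J n` then shows that `ad x` is skew-adjoint between `a` and `n` up to a scalar:
`⟨[x, v], J y⟩ = -⟨[x, J y], v⟩ - θ(x) ⟨J y, v⟩`. If `v ∈ k`, the right-hand side vanishes.
-/

section

variable {R g : Type*} [CommRing R] [LieRing g] [LieAlgebra R g]

/-- Vanishing of the Nijenhuis tensor of `J`, the integrability condition for an almost complex
structure. The condition `J ∘ J = -1` is not built in. -/
def IsIntegrable (J : g →ₗ[R] g) : Prop :=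
  ∀ x y : g, ⁅x, y⁆ - ⁅J x, J y⁆ + J ⁅x, J y⁆ + J ⁅J x, y⁆ = 0

/-- The equation `dω = θ ∧ ω` for the Chevalley–Eilenberg differential `d`, which for the
fundamental form `ω` of a Hermitian structure is the LCK condition with Lee form `θ`. The form `ω`
is any bilinear form, so that alternation need not be proved first. -/
def IsTwistedClosed (ω : LinearMap.BilinForm R g) (θ : g →ₗ[R] R) : Prop :=
  ∀ x y z : g, -ω ⁅x, y⁆ z - ω ⁅y, z⁆ x - ω ⁅z, x⁆ y = θ x * ω y z + θ y * ω z x + θ z * ω x y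

theorem isSkewAdjoint_of_isometry_of_map_map_eq_neg {M : Type*} [AddCommGroup M] [Module R M]
    {B : LinearMap.BilinForm R M} {J : M →ₗ[R] M} (hJ2 : ∀ x, J (J x) = -x)
    (hJB : ∀ x y, B (J x) (J y) = B x y) : B.IsSkewAdjoint J := fun x y ↦ by
  rw [← hJB (J x) y, hJ2, Pi.neg_apply, map_neg, map_neg, LinearMap.neg_apply]

theorem IsIntegrable.lie_map_map {J : g →ₗ[R] g} (hJ : IsIntegrable J) {w y : g}
    (hwy : ⁅w, y⁆ = 0) (hwJy : ⁅w, J y⁆ = 0) : ⁅J w, J y⁆ = J ⁅J w, y⁆ := by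
  have nijenhuis_eq_zero := hJ w y
  rw [hwy, hwJy, map_zero, add_zero, zero_sub] at nijenhuis_eq_zero
  exact neg_add_eq_zero.mp nijenhuis_eq_zero

theorem IsTwistedClosed.apply_lie {ω : LinearMap.BilinForm R g} {θ : g →ₗ[R] R}
    (hω : IsTwistedClosed ω θ) {y v : g} (hyv : ⁅y, v⁆ = 0) (hy : θ y = 0) (hv : θ v = 0) (x : g) :
    ω ⁅x, v⁆ y = ω ⁅x, y⁆ v + θ x * ω y v := by
  have twisted := hω y v x
  rw [hyv, hy, hv, ← lie_skew v x, map_zero, map_neg] at twisted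
  simp only [LinearMap.zero_apply, LinearMap.neg_apply] at twisted
  linear_combination twisted

theorem IsIntegrable.lie_mem_inf_map {J : g →ₗ[R] g} (hJ : IsIntegrable J) {n : LieIdeal R g}
    (hn : ∀ x ∈ n, ∀ y ∈ n, ⁅x, y⁆ = 0) (hspan : n.toSubmodule ⊔ n.toSubmodule.map J = ⊤)
    (x : g) {y : g} (hy : y ∈ n.toSubmodule ⊓ n.toSubmodule.map J) :
    ⁅x, y⁆ ∈ n.toSubmodule ⊓ n.toSubmodule.map J := by
  obtain ⟨hJy, y, hy, rfl⟩ := hy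
  obtain ⟨u, hu, _, ⟨w, hw, rfl⟩, rfl⟩ := Submodule.mem_sup.mp (hspan ▸ Submodule.mem_top : x ∈ _)
  refine ⟨n.lie_mem hJy, ⁅J w, y⁆, n.lie_mem hy, ?_⟩
  rw [add_lie, hn u hu _ hJy, zero_add, hJ.lie_map_map (hn w hw y hy) (hn w hw _ hJy)]

theorem IsTwistedClosed.metric_lie_left {B : LinearMap.BilinForm R g} {J : g →ₗ[R] g}
    {θ : g →ₗ[R] R} (hω : IsTwistedClosed (B ∘ₗ J) θ) (hJ : IsIntegrable J)
    (hskew : B.IsSkewAdjoint J) {n : LieIdeal R g} (hn : ∀ x ∈ n, ∀ y ∈ n, ⁅x, y⁆ = 0)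
    (hθ : ∀ x ∈ n, θ x = 0) (hspan : n.toSubmodule ⊔ n.toSubmodule.map J = ⊤) (x : g) {v y : g}
    (hv : v ∈ n) (hy : y ∈ n.toSubmodule ⊓ n.toSubmodule.map J) :
    B ⁅x, v⁆ y = -B ⁅x, y⁆ v - θ x * B y v := by
  obtain ⟨hJy, y, hy, rfl⟩ := hy
  obtain ⟨u, hu, _, ⟨w, hw, rfl⟩, rfl⟩ := Submodule.mem_sup.mp (hspan ▸ Submodule.mem_top : x ∈ _)
  rw [add_lie, add_lie, hn u hu v hv, hn u hu _ hJy, zero_add, zero_add, map_add, hθ u hu, zero_add]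
  calc
    B ⁅J w, v⁆ (J y) = -B (J ⁅J w, v⁆) y := by
      rw [hskew ⁅J w, v⁆ y, Pi.neg_apply, map_neg, neg_neg]
    _ = -(B (J ⁅J w, y⁆) v + θ (J w) * B (J y) v) :=
      congrArg Neg.neg (hω.apply_lie (hn y hy v hv) (hθ y hy) (hθ v hv) (J w))
    _ = -B ⁅J w, J y⁆ v - θ (J w) * B (J y) v := by
      rw [hJ.lie_map_map (hn w hw y hy) (hn w hw _ hJy), neg_add']

theorem lck_k_is_ideal_general {B : LinearMap.BilinForm R g} {J : g →ₗ[R] g} {θ : g →ₗ[R] R}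
    (hB : B.IsSymm) (hJ2 : ∀ x, J (J x) = -x) (hJB : ∀ x y, B (J x) (J y) = B x y)
    (hJ : IsIntegrable J) (hω : IsTwistedClosed (B ∘ₗ J) θ) {n : LieIdeal R g}
    (hn : ∀ x ∈ n, ∀ y ∈ n, ⁅x, y⁆ = 0) (hθ : ∀ x ∈ n, θ x = 0)
    (hspan : n.toSubmodule ⊔ n.toSubmodule.map J = ⊤) (x : g) {v : g}
    (hv : v ∈ n.toSubmodule ⊓ (n.toSubmodule ⊓ n.toSubmodule.map J).orthogonalBilin B) :
    ⁅x, v⁆ ∈ n.toSubmodule ⊓ (n.toSubmodule ⊓ n.toSubmodule.map J).orthogonalBilin B := by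
  obtain ⟨hvn, hva⟩ := hv
  refine ⟨n.lie_mem hvn, fun y hy ↦ ?_⟩
  have hskew := isSkewAdjoint_of_isometry_of_map_map_eq_neg hJ2 hJB
  have hxy : B ⁅x, y⁆ v = 0 := hva _ (hJ.lie_mem_inf_map hn hspan x hy)
  have hyv : B y v = 0 := hva y hy
  change B y ⁅x, v⁆ = 0
  rw [hB.eq, hω.metric_lie_left hJ hskew hn hθ hspan x hvn hy, hxy, hyv, mul_zero, neg_zero,
    sub_zero]

end

/-- For a non-Vaisman LCK structure on a unimodular meta-abelian Lie algebra
`g = m ⊕ n` with `n + J(n) = g`, the orthogonal complement `k` of `a = n ∩ J(n)`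
inside `n` is an ideal of `g`. -/
theorem lck_k_is_ideal
    (g : Type*) [LieRing g] [LieAlgebra ℝ g] [FiniteDimensional ℝ g]
    (B : g →ₗ[ℝ] g →ₗ[ℝ] ℝ) (J : g →ₗ[ℝ] g) (θ : g →ₗ[ℝ] ℝ)
    (hBsymm : ∀ x y : g, B x y = B y x)
    (hBpos : ∀ x : g, x ≠ 0 → 0 < B x x)
    (hJ2 : ∀ x : g, J (J x) = -x)
    (hJB : ∀ x y : g, B (J x) (J y) = B x y)
    (hJint : ∀ x y : g, ⁅x, y⁆ - ⁅J x, J y⁆ + J ⁅x, J y⁆ + J ⁅J x, y⁆ = 0)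
    (hθbr : ∀ x y : g, θ ⁅x, y⁆ = 0)
    (hLCK : ∀ x y z : g,
      -(B (J ⁅x, y⁆) z) - B (J ⁅y, z⁆) x - B (J ⁅z, x⁆) y =
        θ x * B (J y) z + θ y * B (J z) x + θ z * B (J x) y)
    (m n : Submodule ℝ g)
    (hcompl : IsCompl m n)
    (hnab : ∀ x ∈ n, ∀ y ∈ n, ⁅x, y⁆ = (0 : g))
    (hnideal : ∀ x : g, ∀ y ∈ n, ⁅x, y⁆ ∈ n)
    (hmab : ∀ x ∈ m, ∀ y ∈ m, ⁅x, y⁆ = (0 : g))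
    (hunimod : ∀ x : g, LinearMap.trace ℝ g (LieAlgebra.ad ℝ g x) = 0)
    (hθ0 : θ ≠ 0)
    (hθn : ∀ x ∈ n, θ x = 0)
    (hspan : n ⊔ Submodule.map J n = ⊤)
    (k : Submodule ℝ g)
    (hk : ∀ v : g, v ∈ k ↔ v ∈ n ∧ ∀ y ∈ n ⊓ Submodule.map J n, B v y = 0) :
    ∀ x : g, ∀ v ∈ k, ⁅x, v⁆ ∈ k := by
  obtain rfl : k = n ⊓ (n ⊓ n.map J).orthogonalBilin B := Submodule.ext fun v ↦ by
    simp only [hk, Submodule.mem_inf, Submodule.mem_orthogonalBilin_iff, hBsymm v]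
  exact fun x v hv ↦ lck_k_is_ideal_general (n := { n with lie_mem := hnideal _ _ }) ⟨hBsymm⟩ hJ2
    hJB hJint hLCK hnab hθn hspan x hv
end

section
/- Let g be a finite-dimensional real unimodular Lie algebra with a meta-abelian decomposition g = m ⊕ n and an LCK structure (J, ⟨·,·⟩, θ) such that θ ≠ 0, θ vanishes on n, and n + J(n) = g. Set a = n ∩ J(n), let k be the orthogonal complement of a in n with respect to ⟨·,·⟩, and let A ∈ g be the Lee vector, defined by θ(x) = ⟨A, x⟩ for all x ∈ g. Then the operator Ψ : k → k, Ψ(x) = [A, x], is self-adjoint: ⟨[A, x], y⟩ = ⟨x, [A, y]⟩ for all x, y ∈ k. -/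
/-!
Write `a = n ∩ J n` and let `k` be the orthogonal complement of `a` in `n`. Integrability and the
LCK condition make `a` and `k` ideals, `J k` an abelian subalgebra, and `x · y = ⁅J x, y⁆` a
commutative associative product on `k`. The operator `x · _` multiplies the form `ω` on `k` by
`-θ (J x)`, while unimodularity gives `tr (x · _) = (dim a / 2) θ (J x)`, because `ad (J x)` is an
infinitesimal similarity of the inner product on `a`. A finite-dimensional associative algebra is
nil or has a nonzero idempotent, and in either case these weights force `ω` to vanish on `k`. Thus
`J k` is the orthogonal complement of `n`, so the Lee vector is `A = u + J e` with `u ∈ n`, `e ∈ k`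
and `θ (J x) = ⟨e, x⟩` on `k`. The LCK condition on `J x, J y, e` is then the symmetry of
`ad A = e · _` on `k`.
-/

section IdempotentOfNotNilpotent

open Polynomial

variable {K A : Type*} [Field K] [Ring A] [Algebra K A]

lemma aeval_X_mul_mem {S : NonUnitalSubalgebra K A} {x : A} (hx : x ∈ S) (p : K[X]) :
    aeval x (X * p) ∈ S := by
  induction p using Polynomial.induction_on' with
  | add p q hp hq => simpa only [mul_add, map_add] using add_mem hp hq
  | monomial n c =>
    have hpow : x * x ^ n ∈ S := by
      induction n with
      | zero => simpa only [pow_zero, mul_one] using hx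
      | succ n ih => simpa only [pow_succ'] using mul_mem hx ih
    simpa only [map_mul, aeval_X, aeval_monomial, ← Algebra.smul_def, mul_smul_comm]
      using SMulMemClass.smul_mem c hpow

/-- The idempotent is `u(x) x ^ (r + 1)`, where the minimal polynomial of `x` is `X ^ r * q` with
`X ∤ q` and `u * X ^ (r + 1) + v * q = 1`. -/
theorem exists_mem_isIdempotentElem_ne_zero {S : NonUnitalSubalgebra K A} {x : A} (hxS : x ∈ S)
    (hint : IsIntegral K x) (hx : ¬ IsNilpotent x) : ∃ e ∈ S, IsIdempotentElem e ∧ e ≠ 0 := by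
  obtain ⟨q, hq, hXq⟩ := exists_eq_pow_rootMultiplicity_mul_and_not_dvd (minpoly K x)
    (minpoly.ne_zero hint) 0
  set r := (minpoly K x).rootMultiplicity 0
  simp only [C_0, sub_zero] at hq hXq
  have hzero (p : K[X]) : aeval x (p * (X ^ r * q)) = 0 := by
    rw [← hq, map_mul, minpoly.aeval, mul_zero]
  obtain ⟨u, v, huv⟩ : IsCoprime (X ^ (r + 1)) q :=
    (prime_X.irreducible.coprime_iff_not_dvd.2 hXq).pow_left
  refine ⟨aeval x (X * (u * X ^ r)), aeval_X_mul_mem hxS _, ?_, fun he => hx ⟨r, ?_⟩⟩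
  · have hidem : X * (u * X ^ r) * (X * (u * X ^ r)) =
        X * (u * X ^ r) - u * v * X * (X ^ r * q) := by
      linear_combination u * X ^ (r + 1) * huv
    rw [IsIdempotentElem, ← map_mul, hidem, map_sub, hzero, sub_zero]
  · have hpow : (X ^ r : K[X]) = X ^ r * (X * (u * X ^ r)) + v * (X ^ r * q) := by
      linear_combination -(X ^ r : K[X]) * huv
    simpa only [map_add, map_mul _ (X ^ r) (X * _), he, hzero, mul_zero, add_zero, map_pow, aeval_X]
      using congrArg (aeval x) hpow

end IdempotentOfNotNilpotent

section Trace

variable {K V : Type*} [Field K] [AddCommGroup V] [Module K V] [FiniteDimensional K V]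

theorem trace_eq_trace_restrict_add_trace_restrict {f : Module.End K V} {p q : Submodule K V}
    (hpq : Disjoint p q) (hf : ∀ x, f x ∈ p ⊔ q) (hp : ∀ x ∈ p, f x ∈ p) (hq : ∀ x ∈ q, f x ∈ q) :
    LinearMap.trace K V f =
      LinearMap.trace K p (f.restrict hp) + LinearMap.trace K q (f.restrict hq) := by
  obtain ⟨q', hqq', hq'p⟩ := hpq.symm.exists_isCompl
  set π := p.projection q' hq'p.symm
  have hπp {x : V} (hx : x ∈ p) : π x = x := Submodule.projection_apply_of_mem_left _ hx
  have hπq {x : V} (hx : x ∈ q) : π x = 0 :=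
    (Submodule.projection_apply_eq_zero_iff _).2 (hqq' hx)
  have hfp (x : V) : (π ∘ₗ f) x ∈ p := Submodule.projection_apply_mem _ _
  have hfq (x : V) : (f - π ∘ₗ f) x ∈ q := by
    obtain ⟨y, hy, z, hz, hyz⟩ := Submodule.mem_sup.1 (hf x)
    rwa [LinearMap.sub_apply, LinearMap.comp_apply, ← hyz, map_add, hπp hy, hπq hz, add_zero,
      add_sub_cancel_left]
  have hres_p : (π ∘ₗ f).restrict (fun x _ => hfp x) = f.restrict hp :=
    LinearMap.ext fun x => Subtype.ext (hπp (hp x x.2))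
  have hres_q : (f - π ∘ₗ f).restrict (fun x _ => hfq x) = f.restrict hq :=
    LinearMap.ext fun x => Subtype.ext <| by
      simp only [LinearMap.coe_restrict_apply, LinearMap.sub_apply, LinearMap.comp_apply,
        hπq (hq x x.2), sub_zero]
  rw [← hres_p, ← hres_q, LinearMap.trace_restrict_eq_of_forall_mem p _ hfp,
    LinearMap.trace_restrict_eq_of_forall_mem q _ hfq, ← map_add, add_sub_cancel]

end Trace

section ConformallySkew

variable {K V : Type*} [Field K] [AddCommGroup V] [Module K V]

/-- `T` is an infinitesimal similarity of the bilinear form `B` with factor `c`; for `c = 0` this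
is skew-adjointness. -/
def IsConformallySkew (B : LinearMap.BilinForm K V) (T : Module.End K V) (c : K) : Prop :=
  ∀ x y, B (T x) y + B x (T y) = c * B x y

namespace IsConformallySkew

variable {B : LinearMap.BilinForm K V} {T : Module.End K V} {c : K}

lemma isAdjointPair (h : IsConformallySkew B T c) :
    B.IsAdjointPair B T (c • 1 - T : Module.End K V) := fun x y => by
  simp only [LinearMap.sub_apply, LinearMap.smul_apply, Module.End.one_apply, map_sub, map_smul,
    smul_eq_mul, ← h x y, add_sub_cancel_right]

theorem two_mul_trace [FiniteDimensional K V] (h : IsConformallySkew B T c)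
    (hB : B.Nondegenerate) : 2 * LinearMap.trace K V T = c * Module.finrank K V := by
  have hconj : Module.Dual.transpose T = (B.toDual hB).conj (c • 1 - T) := by
    refine (LinearEquiv.eq_comp_toLinearMap_symm _ _).2 (LinearMap.ext₂ fun x y => ?_)
    have := h x y
    simp only [LinearMap.coe_comp, LinearEquiv.coe_coe, Function.comp_apply,
      Module.Dual.transpose_apply, LinearMap.BilinForm.toDual_def, LinearMap.sub_apply,
      LinearMap.smul_apply, Module.End.one_apply, map_sub, map_smul, smul_eq_mul]
    linear_combination this
  have htrace : LinearMap.trace K V T = c * Module.finrank K V - LinearMap.trace K V T := calc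
    LinearMap.trace K V T = LinearMap.trace K V (c • 1 - T) := by
      rw [← LinearMap.trace_transpose', hconj, LinearMap.trace_conj']
    _ = c * Module.finrank K V - LinearMap.trace K V T := by
      rw [map_sub, map_smul, LinearMap.trace_one, smul_eq_mul]
  linear_combination htrace

theorem eq_zero_of_isNilpotent (h : IsConformallySkew B T c) (hT : IsNilpotent T) (hc : c ≠ 0) :
    B = 0 := by
  have hadj (r : ℕ) : B.IsAdjointPair B (T ^ r : Module.End K V)
      ((c • 1 - T) ^ r : Module.End K V) := by
    induction r with
    | zero => exact LinearMap.isAdjointPair_one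
    | succ r ih => simpa only [pow_succ' T, pow_succ] using h.isAdjointPair.mul ih
  have hunit : IsUnit (c • 1 - T) := by
    have hcomm : Commute (-T) (c • 1) := (Commute.one_right _).smul_right c
    have : IsUnit (c • (1 : Module.End K V)) := isUnit_one.smul (Units.mk0 c hc)
    simpa only [sub_eq_add_neg] using hT.neg.isUnit_add_left_of_commute this hcomm
  obtain ⟨r, hr⟩ := hT
  obtain ⟨S, hS⟩ := (hunit.pow r).exists_right_inv
  refine LinearMap.ext₂ fun x y => ?_
  have hxy := hadj r x (S y)
  rw [hr, ← Module.End.mul_apply, hS] at hxy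
  simpa using hxy.symm

/-- The factor on a nonzero form would be a sum of two of the eigenvalues `0`, `1` of `T`. -/
theorem eq_zero_of_isIdempotentElem (h : IsConformallySkew B T c) (hT : IsIdempotentElem T)
    (hc₀ : c ≠ 0) (hc₁ : c ≠ 1) (hc₂ : c ≠ 2) : B = 0 := by
  have hTT (x : V) : T (T x) = T x := LinearMap.congr_fun hT x
  refine LinearMap.ext₂ fun x y => ?_
  have hboth : B (T x) (T y) = 0 := by
    have := h (T x) (T y)
    rw [hTT, hTT] at this
    exact (mul_eq_zero.1 (by linear_combination this : (2 - c) * B (T x) (T y) = 0)).resolve_left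
      (sub_ne_zero.2 hc₂.symm)
  have hleft : B (T x) y = 0 := by
    have := h (T x) y
    rw [hTT, hboth] at this
    exact (mul_eq_zero.1 (by linear_combination this : (1 - c) * B (T x) y = 0)).resolve_left
      (sub_ne_zero.2 hc₁.symm)
  have hright : B x (T y) = 0 := by
    have := h x (T y)
    rw [hTT, hboth] at this
    exact (mul_eq_zero.1 (by linear_combination this : (1 - c) * B x (T y) = 0)).resolve_left
      (sub_ne_zero.2 hc₁.symm)
  have := h x y
  rw [hleft, hright, add_zero] at this
  exact (mul_eq_zero.1 this.symm).resolve_left hc₀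

end IsConformallySkew

variable [LinearOrder K] [IsStrictOrderedRing K] [FiniteDimensional K V]

lemma trace_pos_of_isIdempotentElem {T : Module.End K V} (hT : IsIdempotentElem T) (hT₀ : T ≠ 0) :
    0 < LinearMap.trace K V T := by
  refine lt_of_le_of_ne ?_ (Ne.symm (mt (LinearMap.IsIdempotentElem.trace_eq_zero_iff hT).1 hT₀))
  rw [(LinearMap.IsIdempotentElem.isProj_range T hT).trace]
  positivity

/-- By `hL`, the product `L x y` on `V` is associative. -/
theorem eq_zero_of_isConformallySkew_of_assoc
    {L : V →ₗ[K] Module.End K V} (hL : ∀ x y, L (L x y) = L x * L y)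
    {B : LinearMap.BilinForm K V} {c : V → K} (hB : ∀ x, IsConformallySkew B (L x) (c x))
    {r : K} (hr : 0 ≤ r) (htrace : ∀ x, LinearMap.trace K V (L x) = -r * c x) (hc : ∃ x, c x ≠ 0) :
    B = 0 := by
  obtain ⟨x, hx⟩ := hc
  by_cases hnil : IsNilpotent (L x)
  · exact (hB x).eq_zero_of_isNilpotent hnil hx
  let S : NonUnitalSubalgebra K (Module.End K V) :=
    { LinearMap.range L with
      mul_mem' := by
        rintro _ _ ⟨y, rfl⟩ ⟨z, rfl⟩
        exact ⟨L y z, hL y z⟩ }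
  obtain ⟨_, ⟨e, rfl⟩, hidem, hne⟩ := exists_mem_isIdempotentElem_ne_zero (S := S) ⟨x, rfl⟩
    (Algebra.IsIntegral.isIntegral (L x)) hnil
  have hce : c e < 0 := by
    have hpos := trace_pos_of_isIdempotentElem hidem hne
    rw [htrace] at hpos
    by_contra! hnonneg
    linarith [mul_nonneg hr hnonneg]
  exact (hB e).eq_zero_of_isIdempotentElem hidem hce.ne (by linarith) (by linarith)

end ConformallySkew

section LieIdeal

variable {R L : Type*} [CommRing R] [LieRing L] [LieAlgebra R L]

lemma lie_mem_of_sup_eq_top {m n : Submodule R L} (hmn : m ⊔ n = ⊤)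
    (hm : ∀ x ∈ m, ∀ y ∈ m, ⁅x, y⁆ ∈ n) (hn : ∀ x : L, ∀ y ∈ n, ⁅x, y⁆ ∈ n) (x y : L) :
    ⁅x, y⁆ ∈ n := by
  obtain ⟨a, ha, b, hb, rfl⟩ := Submodule.mem_sup.1 (hmn ▸ Submodule.mem_top : x ∈ m ⊔ n)
  obtain ⟨c, hc, d, hd, rfl⟩ := Submodule.mem_sup.1 (hmn ▸ Submodule.mem_top : y ∈ m ⊔ n)
  have hbc : ⁅b, c⁆ ∈ n := lie_skew b c ▸ n.neg_mem (hn c b hb)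
  rw [add_lie, lie_add, lie_add]
  exact n.add_mem (n.add_mem (hm a ha c hc) (hn a d hd)) (n.add_mem hbc (hn b d hd))

end LieIdeal

section Hermitian

variable {V : Type*} [AddCommGroup V] [Module ℝ V]

/-- An inner product `B` on a real vector space, together with a linear complex structure `J`
orthogonal for it. -/
structure IsHermitianPair (B : LinearMap.BilinForm ℝ V) (J : Module.End ℝ V) : Prop where
  symm (x y : V) : B x y = B y x
  pos (x : V) : x ≠ 0 → 0 < B x x
  J_J (x : V) : J (J x) = -x
  apply_J_J (x y : V) : B (J x) (J y) = B x y

/-- The maximal `J`-invariant subspace `n ∩ J n` of `n`, written `a` in the paper. -/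
def complexPart (J : Module.End ℝ V) (n : Submodule ℝ V) : Submodule ℝ V := n ⊓ n.map J

/-- The orthogonal complement in `n` of `complexPart J n`, written `k` in the paper. -/
def totallyRealPart (B : LinearMap.BilinForm ℝ V) (J : Module.End ℝ V) (n : Submodule ℝ V) :
    Submodule ℝ V :=
  n ⊓ B.orthogonal (complexPart J n)

namespace IsHermitianPair

variable {B : LinearMap.BilinForm ℝ V} {J : Module.End ℝ V} (h : IsHermitianPair B J)
  {n : Submodule ℝ V}
include h

lemma apply_J_left (x y : V) : B (J x) y = -B x (J y) := by
  rw [← h.apply_J_J x, h.J_J, map_neg, neg_neg]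

lemma eq_zero_of_apply_self {x : V} (hx : B x x = 0) : x = 0 := by
  by_contra hne
  exact (h.pos x hne).ne' hx

lemma disjoint_orthogonal (p : Submodule ℝ V) : Disjoint p (B.orthogonal p) :=
  Submodule.disjoint_def.2 fun x hx hx' => h.eq_zero_of_apply_self (hx' x hx)

lemma nondegenerate_restrict (p : Submodule ℝ V) : (B.restrict p).Nondegenerate :=
  ⟨fun x hx => Subtype.ext (h.eq_zero_of_apply_self (hx x)),
    fun x hx => Subtype.ext (h.eq_zero_of_apply_self (hx x))⟩

lemma mem_complexPart {x : V} : x ∈ complexPart J n ↔ x ∈ n ∧ J x ∈ n := by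
  refine and_congr_right fun hx => ⟨?_, fun hJx => ⟨-J x, n.neg_mem hJx, ?_⟩⟩
  · rintro ⟨y, hy, rfl⟩
    exact h.J_J y ▸ n.neg_mem hy
  · rw [map_neg, h.J_J, neg_neg]

lemma J_mem_complexPart {x : V} (hx : x ∈ complexPart J n) : J x ∈ complexPart J n := by
  rw [h.mem_complexPart] at hx ⊢
  exact ⟨hx.2, h.J_J x ▸ n.neg_mem hx.1⟩

lemma disjoint_complexPart_totallyRealPart : Disjoint (complexPart J n) (totallyRealPart B J n) :=
  (h.disjoint_orthogonal _).mono_right inf_le_right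

lemma complexPart_sup_totallyRealPart [FiniteDimensional ℝ V] :
    complexPart J n ⊔ totallyRealPart B J n = n := by
  have hrefl : B.IsRefl := fun x y hxy => h.symm x y ▸ hxy
  have hcompl := (LinearMap.BilinForm.isCompl_orthogonal_iff_disjoint hrefl).2
    (h.disjoint_orthogonal (complexPart J n))
  have hle : complexPart J n ≤ n := inf_le_left
  rw [totallyRealPart, inf_comm n, ← sup_inf_assoc_of_le _ hle, hcompl.sup_eq_top, top_inf_eq]

lemma sup_map_totallyRealPart [FiniteDimensional ℝ V] :
    n ⊔ (totallyRealPart B J n).map J = n ⊔ n.map J := by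
  refine le_antisymm (sup_le_sup_left (Submodule.map_mono inf_le_left) _)
    (sup_le le_sup_left ?_)
  conv_lhs => rw [← h.complexPart_sup_totallyRealPart (n := n), Submodule.map_sup]
  refine sup_le_sup_right ?_ _
  rintro _ ⟨x, hx, rfl⟩
  exact (h.mem_complexPart.1 hx).2

end IsHermitianPair

end Hermitian

section LCK

variable {g : Type*} [LieRing g] [LieAlgebra ℝ g] {B : LinearMap.BilinForm ℝ g}
  {J : Module.End ℝ g} {θ : Module.Dual ℝ g} {n : Submodule ℝ g}

/-- `(J, B, θ)` is an LCK structure on the Lie algebra `g`, where `B` is the inner product and `θ`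
the Lee form; `d_omega` is `dω = θ ∧ ω` for the fundamental form `ω x y = B (J x) y`. -/
structure IsLCK (B : LinearMap.BilinForm ℝ g) (J : Module.End ℝ g) (θ : Module.Dual ℝ g) : Prop
    extends IsHermitianPair B J where
  integrable (x y : g) : ⁅x, y⁆ - ⁅J x, J y⁆ + J ⁅x, J y⁆ + J ⁅J x, y⁆ = 0
  lee_lie (x y : g) : θ ⁅x, y⁆ = 0
  d_omega (x y z : g) : -B (J ⁅x, y⁆) z - B (J ⁅y, z⁆) x - B (J ⁅z, x⁆) y =
    θ x * B (J y) z + θ y * B (J z) x + θ z * B (J x) y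

/-- An LCK structure on a meta-abelian Lie algebra `g = m ⊕ n` with `θ = 0` on `n` and
`n + J n = g`. Only `n` is recorded, as an abelian subspace containing all brackets: `J` maps
`totallyRealPart B J n` onto an abelian complement of `n`. -/
structure IsMetabelianLCK (B : LinearMap.BilinForm ℝ g) (J : Module.End ℝ g)
    (θ : Module.Dual ℝ g) (n : Submodule ℝ g) : Prop extends IsLCK B J θ where
  lie_mem (x y : g) : ⁅x, y⁆ ∈ n
  lie_eq_zero {x y : g} (hx : x ∈ n) (hy : y ∈ n) : ⁅x, y⁆ = 0
  lee_eq_zero {x : g} (hx : x ∈ n) : θ x = 0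
  sup_map_J : n ⊔ n.map J = ⊤

namespace IsMetabelianLCK

section Ideals

variable (h : IsMetabelianLCK B J θ n)
include h

lemma lie_J_J {x y : g} (hx : x ∈ n) (hy : y ∈ n) : ⁅J x, J y⁆ = J (⁅x, J y⁆ + ⁅J x, y⁆) := by
  have hint := h.integrable x y
  rw [h.lie_eq_zero hx hy, zero_sub, add_assoc, ← map_add] at hint
  exact neg_add_eq_zero.1 hint

lemma lie_J_of_mem_complexPart (z : g) {x : g} (hx : x ∈ complexPart J n) :
    ⁅z, J x⁆ = J ⁅z, x⁆ := by
  obtain ⟨hxn, hJx⟩ := h.mem_complexPart.1 hx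
  obtain ⟨u, hu, _, ⟨y, hy, rfl⟩, rfl⟩ :=
    Submodule.mem_sup.1 (h.sup_map_J ▸ Submodule.mem_top : z ∈ n ⊔ n.map J)
  rw [add_lie, add_lie, h.lie_eq_zero hu hJx, h.lie_eq_zero hu hxn, zero_add, zero_add,
    h.lie_J_J hy hxn, h.lie_eq_zero hy hJx, zero_add]

lemma lie_mem_complexPart (z : g) {x : g} (hx : x ∈ complexPart J n) :
    ⁅z, x⁆ ∈ complexPart J n :=
  h.mem_complexPart.2 ⟨h.lie_mem z x, h.lie_J_of_mem_complexPart z hx ▸ h.lie_mem z (J x)⟩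

lemma lie_mem_totallyRealPart (z : g) {x : g} (hx : x ∈ totallyRealPart B J n) :
    ⁅z, x⁆ ∈ totallyRealPart B J n := by
  refine ⟨h.lie_mem z x, fun y hy => ?_⟩
  have hJy := h.J_mem_complexPart hy
  have horth : B (J ⁅J y, z⁆) x = 0 := by
    rw [← lie_skew, map_neg, map_neg, LinearMap.neg_apply,
      hx.2 _ (h.J_mem_complexPart (h.lie_mem_complexPart z hJy)), neg_zero]
  have hJxJy : B (J x) (J y) = 0 := by rw [h.apply_J_J, h.symm, hx.2 y hy]
  have hd := h.d_omega x (J y) z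
  rw [h.lie_eq_zero hx.1 hJy.1, h.lee_eq_zero hx.1, h.lee_eq_zero hJy.1, horth, hJxJy,
    h.apply_J_J] at hd
  rw [h.symm]
  simpa using hd

lemma lie_J_add_lie_J_eq_zero {x y : g} (hx : x ∈ totallyRealPart B J n)
    (hy : y ∈ totallyRealPart B J n) : ⁅x, J y⁆ + ⁅J x, y⁆ = 0 := by
  have hmem : ⁅x, J y⁆ + ⁅J x, y⁆ ∈ totallyRealPart B J n :=
    add_mem (lie_skew x (J y) ▸ neg_mem (h.lie_mem_totallyRealPart _ hx))
      (h.lie_mem_totallyRealPart _ hy)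
  have hJmem : J (⁅x, J y⁆ + ⁅J x, y⁆) ∈ n := h.lie_J_J hx.1 hy.1 ▸ h.lie_mem _ _
  exact Submodule.disjoint_def.1 h.disjoint_complexPart_totallyRealPart _
    (h.mem_complexPart.2 ⟨hmem.1, hJmem⟩) hmem

lemma lie_J_comm {x y : g} (hx : x ∈ totallyRealPart B J n) (hy : y ∈ totallyRealPart B J n) :
    ⁅J x, y⁆ = ⁅J y, x⁆ := by
  rw [eq_neg_of_add_eq_zero_right (h.lie_J_add_lie_J_eq_zero hx hy), lie_skew]

lemma lie_J_J_eq_zero {x y : g} (hx : x ∈ totallyRealPart B J n) (hy : y ∈ totallyRealPart B J n) :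
    ⁅J x, J y⁆ = 0 := by
  rw [h.lie_J_J hx.1 hy.1, h.lie_J_add_lie_J_eq_zero hx hy, map_zero]

lemma apply_lie_J_sub_apply_lie_J {x y z : g} (hx : x ∈ totallyRealPart B J n)
    (hy : y ∈ totallyRealPart B J n) (hz : z ∈ n) :
    B ⁅J x, z⁆ y - B ⁅J y, z⁆ x = θ (J y) * B z x - θ (J x) * B y z := by
  have hd := h.d_omega (J x) (J y) z
  rw [h.lie_J_J_eq_zero hx hy, h.lee_eq_zero hz, ← lie_skew z (J x)] at hd
  simp only [map_zero, map_neg, LinearMap.zero_apply, LinearMap.neg_apply, h.apply_J_J, h.J_J]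
    at hd
  linear_combination hd

theorem apply_lie_J_comm {e : g} (he : e ∈ totallyRealPart B J n)
    (hθe : ∀ x ∈ totallyRealPart B J n, θ (J x) = B e x) {x y : g} (hx : x ∈ totallyRealPart B J n)
    (hy : y ∈ totallyRealPart B J n) : B ⁅J e, x⁆ y = B x ⁅J e, y⁆ := by
  have hcodazzi := h.apply_lie_J_sub_apply_lie_J hx hy he.1
  rw [hθe x hx, hθe y hy, h.lie_J_comm hx he, h.lie_J_comm hy he, h.symm y e] at hcodazzi
  rw [h.symm x]
  linear_combination hcodazzi

end Ideals

/-- `complexPart J n` as an ideal of `g`. -/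
def complexIdeal (h : IsMetabelianLCK B J θ n) : LieIdeal ℝ g :=
  { complexPart J n with lie_mem := fun {z _} hx => h.lie_mem_complexPart z hx }

/-- `totallyRealPart B J n` as an ideal of `g`. -/
def totallyRealIdeal (h : IsMetabelianLCK B J θ n) : LieIdeal ℝ g :=
  { totallyRealPart B J n with lie_mem := fun {z _} hx => h.lie_mem_totallyRealPart z hx }

/-- The product `x · y = ⁅J x, y⁆` on `k`, through its left multiplications. -/
def realMul (h : IsMetabelianLCK B J θ n) :
    h.totallyRealIdeal →ₗ[ℝ] Module.End ℝ h.totallyRealIdeal :=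
  (LieModule.toEnd ℝ g h.totallyRealIdeal : g →ₗ[ℝ] Module.End ℝ h.totallyRealIdeal) ∘ₗ J ∘ₗ
    h.totallyRealIdeal.toSubmodule.subtype

variable (h : IsMetabelianLCK B J θ n)
include h

lemma realMul_assoc (x y : h.totallyRealIdeal) :
    h.realMul (h.realMul x y) = h.realMul x * h.realMul y := by
  refine LinearMap.ext fun z => Subtype.ext ?_
  calc ⁅J ⁅J (x : g), (y : g)⁆, (z : g)⁆ = ⁅J (z : g), ⁅J (x : g), (y : g)⁆⁆ :=
        h.lie_J_comm (h.realMul x y).2 z.2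
    _ = ⁅J (x : g), ⁅J (z : g), (y : g)⁆⁆ := by
        rw [leibniz_lie, h.lie_J_J_eq_zero z.2 x.2, zero_lie, zero_add]
    _ = ⁅J (x : g), ⁅J (y : g), (z : g)⁆⁆ := by rw [h.lie_J_comm z.2 y.2]

lemma isConformallySkew_toEnd_complexIdeal (z : g) :
    IsConformallySkew (B.restrict h.complexIdeal.toSubmodule) (LieModule.toEnd ℝ g h.complexIdeal z)
      (-θ z) := by
  intro x y
  change B ⁅z, (x : g)⁆ y + B x ⁅z, (y : g)⁆ = -θ z * B x y
  have hJy := h.J_mem_complexPart y.2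
  have hd := h.d_omega z x (J y)
  rw [h.lie_eq_zero x.2.1 hJy.1, h.lee_eq_zero x.2.1, h.lee_eq_zero hJy.1,
    ← lie_skew (J (y : g)) z, h.lie_J_of_mem_complexPart z y.2] at hd
  simp only [map_zero, map_neg, LinearMap.zero_apply, LinearMap.neg_apply, h.apply_J_J, h.J_J]
    at hd
  rw [h.symm x]
  linear_combination -hd

lemma isConformallySkew_toEnd_totallyRealIdeal (z : g) :
    IsConformallySkew (LinearMap.BilinForm.restrict (B ∘ₗ J) h.totallyRealIdeal.toSubmodule)
      (LieModule.toEnd ℝ g h.totallyRealIdeal z) (-θ z) := by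
  intro x y
  change B (J ⁅z, (x : g)⁆) y + B (J x) ⁅z, (y : g)⁆ = -θ z * B (J x) y
  have hd := h.d_omega z x y
  rw [h.lie_eq_zero x.2.1 y.2.1, h.lee_eq_zero x.2.1, h.lee_eq_zero y.2.1,
    ← lie_skew (y : g) z] at hd
  simp only [map_zero, map_neg, LinearMap.zero_apply, LinearMap.neg_apply] at hd
  rw [h.symm (J x), ← neg_neg (B _ (J (x : g))), ← h.apply_J_left]
  linear_combination -hd

variable [FiniteDimensional ℝ g]

lemma exists_add_J_eq (z : g) : ∃ u ∈ n, ∃ x ∈ totallyRealPart B J n, u + J x = z := by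
  have hz : z ∈ n ⊔ (totallyRealPart B J n).map J := by
    rw [h.sup_map_totallyRealPart, h.sup_map_J]
    exact Submodule.mem_top
  obtain ⟨u, hu, _, ⟨x, hx, rfl⟩, rfl⟩ := Submodule.mem_sup.1 hz
  exact ⟨u, hu, x, hx, rfl⟩

lemma exists_lee_J_ne_zero (hθ : θ ≠ 0) : ∃ x ∈ totallyRealPart B J n, θ (J x) ≠ 0 := by
  by_contra! hzero
  refine hθ (LinearMap.ext fun z => ?_)
  obtain ⟨u, hu, x, hx, rfl⟩ := h.exists_add_J_eq z
  rw [map_add, h.lee_eq_zero hu, hzero x hx, add_zero, LinearMap.zero_apply]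

lemma trace_ad_eq_add (z : g) :
    LinearMap.trace ℝ g (LieAlgebra.ad ℝ g z) =
      LinearMap.trace ℝ h.complexIdeal (LieModule.toEnd ℝ g h.complexIdeal z) +
        LinearMap.trace ℝ h.totallyRealIdeal (LieModule.toEnd ℝ g h.totallyRealIdeal z) :=
  trace_eq_trace_restrict_add_trace_restrict h.disjoint_complexPart_totallyRealPart
    (fun x => h.complexPart_sup_totallyRealPart.symm ▸ h.lie_mem z x)
    (fun _ => h.lie_mem_complexPart z) (fun _ => h.lie_mem_totallyRealPart z)

lemma trace_toEnd_totallyRealIdeal {z : g} (hz : LinearMap.trace ℝ g (LieAlgebra.ad ℝ g z) = 0) :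
    LinearMap.trace ℝ h.totallyRealIdeal (LieModule.toEnd ℝ g h.totallyRealIdeal z) =
      -(Module.finrank ℝ h.complexIdeal / 2) * -θ z := by
  have htrace := (h.isConformallySkew_toEnd_complexIdeal z).two_mul_trace
    (h.nondegenerate_restrict _)
  have hsum := h.trace_ad_eq_add z
  rw [hz] at hsum
  linear_combination -hsum - htrace / 2

theorem apply_J_totallyRealPart_eq_zero
    (hg : ∀ z : g, LinearMap.trace ℝ g (LieAlgebra.ad ℝ g z) = 0) (hθ : θ ≠ 0) {x y : g}
    (hx : x ∈ totallyRealPart B J n) (hy : y ∈ totallyRealPart B J n) :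
    B (J x) y = 0 := by
  obtain ⟨z, hz, hθz⟩ := h.exists_lee_J_ne_zero hθ
  have homega : LinearMap.BilinForm.restrict (B ∘ₗ J) h.totallyRealIdeal.toSubmodule = 0 :=
    eq_zero_of_isConformallySkew_of_assoc h.realMul_assoc (c := fun x => -θ (J x))
      (fun x => h.isConformallySkew_toEnd_totallyRealIdeal (J x)) (by positivity)
      (fun x => h.trace_toEnd_totallyRealIdeal (hg (J x))) ⟨⟨z, hz⟩, neg_ne_zero.2 hθz⟩
  exact LinearMap.congr_fun₂ homega ⟨x, hx⟩ ⟨y, hy⟩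

theorem apply_J_eq_zero (hg : ∀ z : g, LinearMap.trace ℝ g (LieAlgebra.ad ℝ g z) = 0)
    (hθ : θ ≠ 0) {u x : g} (hu : u ∈ n) (hx : x ∈ totallyRealPart B J n) : B u (J x) = 0 := by
  obtain ⟨y, hy, z, hz, rfl⟩ := Submodule.mem_sup.1
    (h.complexPart_sup_totallyRealPart.symm ▸ hu : u ∈ complexPart J n ⊔ totallyRealPart B J n)
  have hyx : B y (J x) = 0 := by
    rw [← neg_neg (B y (J x)), ← h.apply_J_left, hx.2 _ (h.J_mem_complexPart hy), neg_zero]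
  rw [map_add, LinearMap.add_apply, hyx, zero_add, h.symm,
    h.apply_J_totallyRealPart_eq_zero hg hθ hx hz]

end IsMetabelianLCK

end LCK

/-- For a non-Vaisman LCK structure on a unimodular meta-abelian Lie algebra
`g = m ⊕ n` with `n + J(n) = g`, the operator `x ↦ ⁅A, x⁆` on the orthogonal
complement `k` of `a = n ∩ J(n)` in `n` is self-adjoint, where `A` is the Lee
vector. -/
theorem lck_ad_Lee_self_adjoint
    (g : Type*) [LieRing g] [LieAlgebra ℝ g] [FiniteDimensional ℝ g]
    (B : g →ₗ[ℝ] g →ₗ[ℝ] ℝ) (J : g →ₗ[ℝ] g) (θ : g →ₗ[ℝ] ℝ)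
    (hBsymm : ∀ x y : g, B x y = B y x)
    (hBpos : ∀ x : g, x ≠ 0 → 0 < B x x)
    (hJ2 : ∀ x : g, J (J x) = -x)
    (hJB : ∀ x y : g, B (J x) (J y) = B x y)
    (hJint : ∀ x y : g, ⁅x, y⁆ - ⁅J x, J y⁆ + J ⁅x, J y⁆ + J ⁅J x, y⁆ = 0)
    (hθbr : ∀ x y : g, θ ⁅x, y⁆ = 0)
    (hLCK : ∀ x y z : g,
      -(B (J ⁅x, y⁆) z) - B (J ⁅y, z⁆) x - B (J ⁅z, x⁆) y =
        θ x * B (J y) z + θ y * B (J z) x + θ z * B (J x) y)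
    (m n : Submodule ℝ g)
    (hcompl : IsCompl m n)
    (hnab : ∀ x ∈ n, ∀ y ∈ n, ⁅x, y⁆ = (0 : g))
    (hnideal : ∀ x : g, ∀ y ∈ n, ⁅x, y⁆ ∈ n)
    (hmab : ∀ x ∈ m, ∀ y ∈ m, ⁅x, y⁆ = (0 : g))
    (hunimod : ∀ x : g, LinearMap.trace ℝ g (LieAlgebra.ad ℝ g x) = 0)
    (hθ0 : θ ≠ 0)
    (hθn : ∀ x ∈ n, θ x = 0)
    (hspan : n ⊔ Submodule.map J n = ⊤)
    (k : Submodule ℝ g)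
    (hk : ∀ v : g, v ∈ k ↔ v ∈ n ∧ ∀ y ∈ n ⊓ Submodule.map J n, B v y = 0)
    (A : g) (hA : ∀ x : g, θ x = B A x) :
    ∀ x ∈ k, ∀ y ∈ k, B ⁅A, x⁆ y = B x ⁅A, y⁆ := by
  have h : IsMetabelianLCK B J θ n :=
    { symm := hBsymm, pos := hBpos, J_J := hJ2, apply_J_J := hJB, integrable := hJint
      lee_lie := hθbr, d_omega := hLCK
      lie_mem := lie_mem_of_sup_eq_top hcompl.sup_eq_top
        (fun x hx y hy => hmab x hx y hy ▸ n.zero_mem) hnideal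
      lie_eq_zero := fun hx hy => hnab _ hx _ hy
      lee_eq_zero := fun hx => hθn _ hx
      sup_map_J := hspan }
  obtain rfl : k = totallyRealPart B J n := Submodule.ext fun v =>
    (hk v).trans (and_congr_right fun _ => forall₂_congr fun y _ => by rw [hBsymm])
  obtain ⟨u, hu, e, he, rfl⟩ := h.exists_add_J_eq A
  have hθJ : ∀ x ∈ totallyRealPart B J n, θ (J x) = B e x := fun x hx => by
    rw [hA, map_add, LinearMap.add_apply, h.apply_J_eq_zero hunimod hθ0 hu hx, hJB, zero_add]
  have had : ∀ x ∈ totallyRealPart B J n, ⁅u + J e, x⁆ = ⁅J e, x⁆ := fun x hx => by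
    rw [add_lie, hnab u hu x hx.1, zero_add]
  intro x hx y hy
  rw [had x hx, had y hy]
  exact h.apply_lie_J_comm he hθJ hx hy
end
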